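/- arXiv:1911.10577 — 3 statements merged into one kernel-verified Lean document; each statement's English description precedes it below -/
import Mathlib

section
/- Let R ⊆ S be an FCP ring extension, J an ideal of S and I := J ∩ R. If R ⊆ S is catenarian, then the induced extension R/I ⊆ S/J (via the injective ring homomorphism R/I → S/J induced by the inclusion R → S) is catenarian. -/
/-!
Taking preimages under `S → S/J` identifies `[R/I, S/J]` with the interval `[R + J, S]` of `[R, S]`,
so it preserves coverings, and it suffices that `R + J ⊆ S` is catenarian. Prepending a fixed
maximal chain from `R` to `R + J` turns maximal chains from `R + J` to `S` into maximal chains from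
`R` to `S`, and lengthens all of them by the same amount.
-/

/-- A maximal chain of length `n` from `T` to `U`: each step is a covering. -/
def IsMaxChainFromTo {α : Type*} [PartialOrder α] (T U : α) (n : ℕ)
    (c : Fin (n + 1) → α) : Prop :=
  c 0 = T ∧ c (Fin.last n) = U ∧ ∀ i : Fin n, c i.castSucc ⋖ c i.succ

/-- The subextension determined by `T ≤ U` is catenarian: all maximal chains from
`T` to `U` have the same length. -/
def IsCatenarianFromTo {α : Type*} [PartialOrder α] (T U : α) : Prop :=
  ∀ (n m : ℕ) (c : Fin (n + 1) → α) (d : Fin (m + 1) → α),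
    IsMaxChainFromTo T U n c → IsMaxChainFromTo T U m d → n = m

/-- The extension `R ⊆ S` has FCP: every chain of `R`-subalgebras of `S` is finite. -/
def IsFCPExt (R S : Type*) [CommRing R] [CommRing S] [Algebra R S] : Prop :=
  ∀ C : Set (Subalgebra R S), IsChain (· ≤ ·) C → C.Finite

/-- The extension `R ⊆ S` is catenarian. -/
def IsCatenarianExt (R S : Type*) [CommRing R] [CommRing S] [Algebra R S] : Prop :=
  IsCatenarianFromTo (⊥ : Subalgebra R S) ⊤

/-- The length `ℓ[T,U]`: the supremum of lengths of chains from `T` to `U`. -/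
noncomputable def extLength {α : Type*} [PartialOrder α] (T U : α) : ℕ :=
  sSup {n | ∃ c : Fin (n + 1) → α, StrictMono c ∧ c 0 = T ∧ c (Fin.last n) = U}

section Order

variable {α β : Type*} [PartialOrder α] [PartialOrder β] {A T U : α} {n : ℕ} {c : Fin (n + 1) → α}

theorem IsMaxChainFromTo.cons (hc : IsMaxChainFromTo T U n c) (hAT : A ⋖ T) :
    IsMaxChainFromTo A U (n + 1) (Fin.cons A c : Fin (n + 1 + 1) → α) := by
  obtain ⟨rfl, rfl, hcov⟩ := hc
  refine ⟨rfl, by rw [← Fin.succ_last, Fin.cons_succ], Fin.cases hAT fun i => ?_⟩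
  simpa only [← Fin.succ_castSucc, Fin.cons_succ] using hcov i

theorem IsMaxChainFromTo.map (hc : IsMaxChainFromTo T U n c) (e : α ↪o β)
    (he : (Set.range e).OrdConnected) : IsMaxChainFromTo (e T) (e U) n (e ∘ c) :=
  ⟨congrArg e hc.1, congrArg e hc.2.1, fun i => (hc.2.2 i).image e he⟩

theorem exists_isMaxChainFromTo [WellFoundedLT α] [WellFoundedGT α] (hTU : T ≤ U) :
    ∃ (n : ℕ) (c : Fin (n + 1) → α), IsMaxChainFromTo T U n c := by
  obtain ⟨a, h0, n, hn, hcov⟩ := exists_covBy_seq_of_wellFoundedLT_wellFoundedGT_of_le hTU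
  exact ⟨n, fun i => a i, h0, hn, fun i => hcov i i.isLt⟩

theorem IsCatenarianFromTo.of_covBy (hAU : IsCatenarianFromTo A U) (hAT : A ⋖ T) :
    IsCatenarianFromTo T U := fun _ _ _ _ hc hd =>
  Nat.succ_injective (hAU _ _ _ _ (hc.cons hAT) (hd.cons hAT))

theorem IsCatenarianFromTo.of_isMaxChainFromTo (hAU : IsCatenarianFromTo A U)
    (hc : IsMaxChainFromTo A T n c) : IsCatenarianFromTo T U := by
  obtain ⟨rfl, rfl, hcov⟩ := hc
  exact Fin.induction hAU (fun i hi => hi.of_covBy (hcov i)) (Fin.last n)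

theorem IsCatenarianFromTo.of_orderEmbedding (e : α ↪o β) (he : (Set.range e).OrdConnected)
    (h : IsCatenarianFromTo (e T) (e U)) : IsCatenarianFromTo T U :=
  fun n m _ _ hc hd => h n m _ _ (hc.map e he) (hd.map e he)

theorem wellFoundedLT_of_forall_isChain_finite
    (h : ∀ C : Set α, IsChain (· ≤ ·) C → C.Finite) : WellFoundedLT α := by
  refine ⟨RelEmbedding.wellFounded_iff_isEmpty.2 ⟨fun f => ?_⟩⟩
  have hf : StrictAnti f := fun _ _ hab => f.map_rel_iff.2 hab
  exact Set.infinite_range_of_injective f.injective (h _ hf.antitone.isChain_range)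

theorem wellFoundedGT_of_forall_isChain_finite
    (h : ∀ C : Set α, IsChain (· ≤ ·) C → C.Finite) : WellFoundedGT α :=
  have : WellFoundedLT αᵒᵈ := wellFoundedLT_of_forall_isChain_finite fun C hC =>
    h (OrderDual.toDual ⁻¹' C) hC.symm
  inferInstanceAs (WellFoundedGT αᵒᵈᵒᵈ)

end Order

section Algebra

variable {R S A B : Type*} [CommRing R] [CommRing S] [CommRing A] [CommRing B]
  [Algebra R S] [Algebra R A] [Algebra A B] [Algebra R B] [IsScalarTower R A B]

theorem IsFCPExt.exists_isMaxChainFromTo (hFCP : IsFCPExt R S) {T U : Subalgebra R S}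
    (hTU : T ≤ U) : ∃ (n : ℕ) (c : Fin (n + 1) → Subalgebra R S), IsMaxChainFromTo T U n c :=
  have := wellFoundedLT_of_forall_isChain_finite hFCP
  have := wellFoundedGT_of_forall_isChain_finite hFCP
  _root_.exists_isMaxChainFromTo hTU

/-- Taking preimages under a surjection `g : S → B` embeds the lattice `[A, B]` of
`A`-subalgebras of `B` into `[R, S]`. -/
def subalgebraComapEmbedding (g : S →ₐ[R] B) (hg : Function.Surjective g) :
    Subalgebra A B ↪o Subalgebra R S :=
  OrderEmbedding.ofMapLEIff (fun T => (T.restrictScalars R).comap g) fun _ _ =>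
    hg.preimage_subset_preimage_iff

theorem range_subalgebraComapEmbedding (hRA : Function.Surjective (algebraMap R A))
    (g : S →ₐ[R] B) (hg : Function.Surjective g) :
    Set.range (subalgebraComapEmbedding (A := A) g hg) =
      Set.Ici (subalgebraComapEmbedding g hg (⊥ : Subalgebra A B)) := by
  refine subset_antisymm (Set.range_subset_iff.2 fun T => ?_) fun T hT => ?_
  · exact (subalgebraComapEmbedding g hg).monotone bot_le
  · have hker : g ⁻¹' {0} ⊆ T := fun x hx => hT <|
      show g x ∈ (⊥ : Subalgebra A B) from Set.mem_singleton_iff.1 hx ▸ zero_mem _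
    let image : Subalgebra A B :=
      { T.map g with
        algebraMap_mem' := hRA.forall.2 fun r => by
          rw [← IsScalarTower.algebraMap_apply]
          exact (T.map g).algebraMap_mem r }
    exact ⟨image, Subalgebra.comap_map_eq_self hker⟩

/-- For `A = R/I` and `B = S/J`, the chain `c` runs from `R` to `R + J`. -/
theorem stmt_1_general (hRA : Function.Surjective (algebraMap R A)) (g : S →ₐ[R] B)
    (hg : Function.Surjective g) {n : ℕ} {c : Fin (n + 1) → Subalgebra R S}
    (hc : IsMaxChainFromTo ⊥ (((⊥ : Subalgebra A B).restrictScalars R).comap g) n c)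
    (hcat : IsCatenarianExt R S) : IsCatenarianExt A B := by
  refine .of_orderEmbedding (subalgebraComapEmbedding g hg) ?_ ?_
  · exact range_subalgebraComapEmbedding hRA g hg ▸ Set.ordConnected_Ici
  · exact hcat.of_isMaxChainFromTo hc

end Algebra

/-- If `R ⊆ S` is a catenarian FCP extension, `J` an ideal of `S` and
`I := J ∩ R`, then the induced extension `R/I ⊆ S/J` is catenarian. -/
theorem stmt_1 {R S : Type*} [CommRing R] [CommRing S] [Algebra R S]
    (hinj : Function.Injective (algebraMap R S)) (hFCP : IsFCPExt R S)
    (J : Ideal S) (hcat : IsCatenarianExt R S) :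
    letI : Algebra (R ⧸ J.comap (algebraMap R S)) (S ⧸ J) :=
      (Ideal.quotientMap J (algebraMap R S) le_rfl).toAlgebra
    IsCatenarianExt (R ⧸ J.comap (algebraMap R S)) (S ⧸ J) := by
  let : Algebra (R ⧸ J.comap (algebraMap R S)) (S ⧸ J) :=
    (Ideal.quotientMap J (algebraMap R S) le_rfl).toAlgebra
  have : IsScalarTower R (R ⧸ J.comap (algebraMap R S)) (S ⧸ J) := .of_algebraMap_eq' rfl
  obtain ⟨_, _, hc⟩ := hFCP.exists_isMaxChainFromTo bot_le
  exact stmt_1_general Ideal.Quotient.mk_surjective (Ideal.Quotient.mkₐ R J)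
    Ideal.Quotient.mk_surjective hc hcat
end

section
/- Let R ⊆ S be an FCP ring extension. The following statements are equivalent: (1) R ⊆ S is catenarian; (2) the localized extension R_M ⊆ S_M is catenarian for each M ∈ MSupp(S/R); (3) the localized extension R_P ⊆ S_P is catenarian for each P ∈ Supp(S/R). Here, for a prime P of R, S_P denotes the localization of S at the multiplicative set R ∖ P. -/
/-- `S/R` as an `R`-module. -/
abbrev extQuot (R S : Type*) [CommRing R] [CommRing S] [Algebra R S] :=
  S ⧸ LinearMap.range (Algebra.linearMap R S)

section Order

variable {α β : Type*} [PartialOrder α] [PartialOrder β] {a b x : α} {m n : ℕ}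

namespace IsMaxChainFromTo

variable {c : Fin (m + 1) → α} {d : Fin (n + 1) → α}

lemma strictMono (hc : IsMaxChainFromTo a b m c) : StrictMono c :=
  Fin.strictMono_iff_lt_succ.2 fun i => (hc.2.2 i).lt

lemma mem_Icc (hc : IsMaxChainFromTo a b m c) (i : Fin (m + 1)) : c i ∈ Set.Icc a b :=
  ⟨hc.1.symm.trans_le (hc.strictMono.monotone (Fin.zero_le i)),
    (hc.strictMono.monotone (Fin.le_last i)).trans_eq hc.2.1⟩

lemma trans (hc : IsMaxChainFromTo a x m c) (hd : IsMaxChainFromTo x b n d) :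
    ∃ e, IsMaxChainFromTo a b (m + n) e := by
  let p : RelSeries {(x, y) : α × α | x ⋖ y} := ⟨m, c, hc.2.2⟩
  let q : RelSeries {(x, y) : α × α | x ⋖ y} := ⟨n, d, hd.2.2⟩
  have hpq : p.last = q.head := hc.2.1.trans hd.1.symm
  exact ⟨(p.smash q hpq).toFun, (RelSeries.head_smash hpq).trans hc.1,
    (RelSeries.last_smash hpq).trans hd.2.1, (p.smash q hpq).step⟩

end IsMaxChainFromTo

lemma isMaxChainFromTo_of_covBy (h : a ⋖ b) : IsMaxChainFromTo a b 1 ![a, b] :=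
  ⟨rfl, rfl, by simpa using h⟩

lemma exists_isMaxChainFromTo_s7 [WellFoundedLT α] [WellFoundedGT α] (h : a ≤ b) :
    ∃ n c, IsMaxChainFromTo a b n c := by
  obtain ⟨c, hc₀, n, hcn, hc⟩ := exists_covBy_seq_of_wellFoundedLT_wellFoundedGT_of_le h
  exact ⟨n, fun i => c i, hc₀, hcn, fun i => hc i i.2⟩

lemma isCatenarianFromTo_map_iff (f : α ↪o β) (hf : (Set.range f).OrdConnected) :
    IsCatenarianFromTo (f a) (f b) ↔ IsCatenarianFromTo a b := by
  have map_iff (n : ℕ) (c : Fin (n + 1) → α) :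
      IsMaxChainFromTo (f a) (f b) n (f ∘ c) ↔ IsMaxChainFromTo a b n c := by
    simp only [IsMaxChainFromTo, Function.comp_apply, f.injective.eq_iff,
      hf.apply_covBy_apply_iff f]
  have exists_lift {n : ℕ} {d : Fin (n + 1) → β} (hd : IsMaxChainFromTo (f a) (f b) n d) :
      ∃ c, f ∘ c = d := by
    choose c hc using fun i => hf.out ⟨a, rfl⟩ ⟨b, rfl⟩ (hd.mem_Icc i)
    exact ⟨c, funext hc⟩
  refine ⟨fun h n m c d hc hd => h n m _ _ ((map_iff n c).2 hc) ((map_iff m d).2 hd), ?_⟩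
  intro h n m c' d' hc hd
  obtain ⟨c, rfl⟩ := exists_lift hc
  obtain ⟨d, rfl⟩ := exists_lift hd
  exact h n m c d ((map_iff n c).1 hc) ((map_iff m d).1 hd)

/-- `ρ` is a rank function on the interval `[a, b]`: it grows by one along every covering. Its
values outside the interval are irrelevant. -/
def IsRankOn (a b : α) (ρ : α → ℕ) : Prop :=
  ∀ ⦃x y⦄, a ≤ x → x ⋖ y → y ≤ b → ρ y = ρ x + 1

lemma apply_last_eq_apply_zero_add_sum {M : Type*} [AddCommMonoid M] {f : Fin (n + 1) → M}
    {g : Fin n → M} (h : ∀ i, f i.succ = f i.castSucc + g i) :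
    f (Fin.last n) = f 0 + ∑ i, g i := by
  induction n with
  | zero => simp
  | succ n ih =>
    rw [Fin.sum_univ_castSucc, ← add_assoc, ← Fin.succ_last, h,
      ih (f := fun i => f i.castSucc) fun i => by simpa using h i.castSucc]
    rfl

lemma IsRankOn.apply_eq_add {ρ : α → ℕ} (hρ : IsRankOn a b ρ) {c : Fin (n + 1) → α}
    (hc : IsMaxChainFromTo a b n c) : ρ b = ρ a + n := by
  simpa [hc.1, hc.2.1] using apply_last_eq_apply_zero_add_sum (f := ρ ∘ c) fun i =>
    hρ (hc.mem_Icc _).1 (hc.2.2 i) (hc.mem_Icc _).2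

lemma isCatenarianFromTo_iff_exists_isRankOn [WellFoundedLT α] [WellFoundedGT α] :
    IsCatenarianFromTo a b ↔ ∃ ρ, IsRankOn a b ρ := by
  constructor
  · intro h
    choose! ρ c hc using fun x (hx : a ≤ x) => exists_isMaxChainFromTo_s7 hx
    refine ⟨ρ, fun x y hax hxy hyb => ?_⟩
    obtain ⟨k, d, hd⟩ := exists_isMaxChainFromTo_s7 hyb
    obtain ⟨e, he⟩ := (hc y (hax.trans hxy.le)).trans hd
    obtain ⟨c', hc'⟩ := (hc x hax).trans (isMaxChainFromTo_of_covBy hxy)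
    obtain ⟨e', he'⟩ := hc'.trans hd
    exact Nat.add_right_cancel (h _ _ e e' he he')
  · rintro ⟨ρ, hρ⟩ m n c d hc hd
    exact Nat.add_left_cancel ((hρ.apply_eq_add hc).symm.trans (hρ.apply_eq_add hd))

lemma IsCatenarianFromTo.of_le [WellFoundedLT α] [WellFoundedGT α] (h : IsCatenarianFromTo a b)
    (hax : a ≤ x) : IsCatenarianFromTo x b := by
  rw [isCatenarianFromTo_iff_exists_isRankOn] at h ⊢
  exact h.imp fun ρ hρ y z hxy => hρ (hax.trans hxy)

lemma isCatenarianFromTo_self (a : α) : IsCatenarianFromTo a a := by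
  have length_eq_zero {n : ℕ} {c : Fin (n + 1) → α} (hc : IsMaxChainFromTo a a n c) : n = 0 := by
    simpa using hc.strictMono.injective (hc.1.trans hc.2.1.symm)
  intro m n c d hc hd
  rw [length_eq_zero hc, length_eq_zero hd]

lemma multiset_eq_of_countP_le_eq [DecidableLE α] {s t : Multiset α}
    (h : ∀ x, s.countP (· ≤ x) = t.countP (· ≤ x)) : s = t := by
  classical
  induction hn : s.card generalizing s t with
  | zero =>
    obtain rfl := Multiset.card_eq_zero.1 hn
    refine (Multiset.eq_zero_of_forall_notMem fun x hx => ?_).symm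
    exact Multiset.countP_eq_zero.1 ((h x).symm.trans (by simp)) x hx le_rfl
  | succ n ih =>
    obtain ⟨x, hxs, hx⟩ := s.toFinset.exists_minimal (by
      simpa [Finset.nonempty_iff_ne_empty, ← Multiset.card_eq_zero] using hn ▸ n.succ_ne_zero)
    have exists_mem_le {s t : Multiset α} (h : ∀ x, s.countP (· ≤ x) = t.countP (· ≤ x)) {y : α}
        (hy : y ∈ s) : ∃ z ∈ t, z ≤ y :=
      Multiset.countP_pos.1 (h y ▸ Multiset.countP_pos.2 ⟨y, hy, le_rfl⟩)
    rw [Multiset.mem_toFinset] at hxs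
    have hxt : x ∈ t := by
      obtain ⟨y, hyt, hyx⟩ := exists_mem_le h hxs
      obtain ⟨z, hzs, hzy⟩ := exists_mem_le (fun x => (h x).symm) hyt
      rwa [hyx.antisymm ((hx (Multiset.mem_toFinset.2 hzs) (hzy.trans hyx)).trans hzy)] at hyt
    obtain ⟨s, rfl⟩ := Multiset.exists_cons_of_mem hxs
    obtain ⟨t, rfl⟩ := Multiset.exists_cons_of_mem hxt
    refine congrArg (x ::ₘ ·) (ih (fun y => ?_) (by simpa using hn))
    simpa only [Multiset.countP_cons, Nat.add_right_cancel_iff] using h y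

end Order

section Saturation

variable {R S : Type*} [CommRing R] [CommRing S] [Algebra R S] {A B : Subalgebra R S}
  {V W : Submonoid R} {x : S}

/-- The saturation of an `R`-subalgebra `A` of `S` with respect to `W ⊆ R`, that is, the inverse
image of `A_W` under `S → S_W`. -/
def saturation (W : Submonoid R) : ClosureOperator (Subalgebra R S) :=
  .mk' (fun A => A.saturation (Algebra.algebraMapSubmonoid S W)
      (Set.image_subset_iff.2 fun r _ => A.algebraMap_mem r))
    (fun _ _ hAB _ ⟨w, hw, hx⟩ => ⟨w, hw, hAB hx⟩)
    (fun A => A.le_saturation)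
    (fun _ => Subalgebra.saturation_saturation.le)

lemma mem_saturation : x ∈ saturation W A ↔ ∃ w ∈ W, w • x ∈ A := by
  refine Set.exists_mem_image.trans ?_
  simp only [SetLike.mem_coe, Algebra.smul_def]

lemma saturation_mono_left (h : V ≤ W) : saturation V A ≤ saturation W A := fun _ hx =>
  have ⟨v, hv, hvx⟩ := mem_saturation.1 hx
  mem_saturation.2 ⟨v, h hv, hvx⟩

lemma saturation_inf : saturation W (A ⊓ B) = saturation W A ⊓ saturation W B := by
  refine le_antisymm ((saturation W).closure_inf_le A B) fun x ⟨hA, hB⟩ => ?_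
  obtain ⟨v, hv, hvx⟩ := mem_saturation.1 hA
  obtain ⟨w, hw, hwx⟩ := mem_saturation.1 hB
  refine mem_saturation.2 ⟨v * w, W.mul_mem hv hw, ?_, ?_⟩
  · rw [mul_comm, mul_smul]
    exact A.smul_mem hvx w
  · rw [mul_smul]
    exact B.smul_mem hwx v

lemma isClosed_saturation_iff : (saturation W).IsClosed A ↔ ∀ w ∈ W, ∀ x, w • x ∈ A → x ∈ A := by
  rw [ClosureOperator.isClosed_iff_closure_le]
  exact ⟨fun h w hw x hx => h (mem_saturation.2 ⟨w, hw, hx⟩), fun h x hx =>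
    have ⟨w, hw, hwx⟩ := mem_saturation.1 hx
    h w hw x hwx⟩

lemma exists_pow_smul_mem_adjoin [WellFoundedLT (Subalgebra R S)] (r : R) (x : S) :
    ∃ n : ℕ, r ^ n • x ∈ Algebra.adjoin R {r ^ (n + 1) • x} := by
  have antitone : Antitone fun n : ℕ => Algebra.adjoin R {r ^ n • x} :=
    antitone_nat_of_succ_le fun n => Algebra.adjoin_singleton_le <| by
      rw [pow_succ', mul_smul]
      exact Subalgebra.smul_mem _ (Algebra.self_mem_adjoin_singleton R _) r
  obtain ⟨n, hn⟩ := WellFoundedLT.antitone_chain_condition antitone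
  exact ⟨n, hn (n + 1) n.le_succ ▸ Algebra.self_mem_adjoin_singleton R _⟩

lemma exists_eq_algebraMap_add_mul_of_mem_adjoin {y z : S} (h : z ∈ Algebra.adjoin R {y}) :
    ∃ r : R, ∃ q ∈ Algebra.adjoin R {y}, z = algebraMap R S r + y * q := by
  rw [Algebra.adjoin_singleton_eq_range_aeval] at h ⊢
  obtain ⟨p, rfl⟩ := (AlgHom.mem_range _).1 h
  refine ⟨p.coeff 0, Polynomial.aeval y p.divX, ⟨p.divX, rfl⟩, ?_⟩
  nth_rw 1 [← p.X_mul_divX_add, add_comm]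
  simp only [map_add, map_mul, Polynomial.aeval_X, Polynomial.aeval_C]

lemma isClosed_saturation_of_saturation_bot_le [WellFoundedLT (Subalgebra R S)]
    (h : saturation W ⊥ ≤ A) : (saturation W).IsClosed A := by
  refine isClosed_saturation_iff.2 fun w hw x hx => ?_
  obtain ⟨n, hn⟩ := exists_pow_smul_mem_adjoin w x
  obtain ⟨r, q, hq, hxq⟩ := exists_eq_algebraMap_add_mul_of_mem_adjoin hn
  have hqA : q ∈ A := by
    refine Algebra.adjoin_singleton_le (S := A) ?_ hq
    rw [pow_succ, mul_smul]
    exact A.smul_mem hx _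
  have hsub : x - w • x * q ∈ A := by
    refine h (mem_saturation.2 ⟨w ^ n, W.pow_mem hw n, Algebra.mem_bot.2 ⟨r, ?_⟩⟩)
    rw [smul_sub, hxq, pow_succ, mul_smul, smul_mul_assoc, add_sub_cancel_right]
  simpa using A.add_mem hsub (A.mul_mem hx hqA)

end Saturation

section CrucialIdeal

variable {R S : Type*} [CommRing R] [CommRing S] [Algebra R S] {A B : Subalgebra R S}
  {W : Submonoid R} {r : R} {b : S}

lemma le_saturation_or_saturation_inf_eq (h : A ⋖ B) (W : Submonoid R) :
    B ≤ saturation W A ∨ saturation W A ⊓ B = A := by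
  have := h.eq_or_eq (le_inf ((saturation W).le_closure A) h.le) inf_le_right
  rwa [inf_eq_right, or_comm] at this

/-- The elements of `R` acting locally nilpotently on `B / A`. For a covering `A ⋖ B` this is the
contraction to `R` of the crucial maximal ideal of the minimal extension `A ⊂ B`. -/
def crucialIdeal (A B : Subalgebra R S) : Ideal R :=
  ⨅ b ∈ B, ((Subalgebra.toSubmodule A).colon {b}).radical

lemma mem_crucialIdeal : r ∈ crucialIdeal A B ↔ ∀ b ∈ B, ∃ n : ℕ, r ^ n • b ∈ A := by
  simp [crucialIdeal, Submodule.mem_iInf, Ideal.mem_radical_iff, Submodule.mem_colon_singleton]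

lemma mem_crucialIdeal_iff_le_saturation :
    r ∈ crucialIdeal A B ↔ B ≤ saturation (.powers r) A := by
  simp [mem_crucialIdeal, SetLike.le_def, mem_saturation, Submonoid.mem_powers_iff]

lemma mem_crucialIdeal_of_pow_smul_mem (h : A ⋖ B) (hb : b ∈ B) (hbA : b ∉ A)
    {n : ℕ} (hr : r ^ n • b ∈ A) : r ∈ crucialIdeal A B := by
  rw [mem_crucialIdeal_iff_le_saturation]
  refine (le_saturation_or_saturation_inf_eq h _).resolve_right fun h => hbA ?_
  rw [← h]
  exact ⟨mem_saturation.2 ⟨_, ⟨n, rfl⟩, hr⟩, hb⟩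

lemma crucialIdeal_isPrime (h : A ⋖ B) : (crucialIdeal A B).IsPrime := by
  obtain ⟨b, hb, hbA⟩ := SetLike.exists_of_lt h.lt
  refine ⟨fun htop => hbA ?_, fun {r s} hrs => ?_⟩
  · obtain ⟨n, hn⟩ := mem_crucialIdeal.1 ((Ideal.eq_top_iff_one _).1 htop) b hb
    simpa using hn
  · obtain ⟨n, hn⟩ := mem_crucialIdeal.1 hrs b hb
    by_cases hs : s ^ n • b ∈ A
    · exact .inr (mem_crucialIdeal_of_pow_smul_mem h hb hbA hs)
    · rw [mul_pow, mul_smul] at hn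
      exact .inl (mem_crucialIdeal_of_pow_smul_mem h (B.smul_mem hb _) hs hn)

/-- The crucial ideal of a covering, as a point of the spectrum of `R`. -/
def crucialPrime (h : A ⋖ B) : PrimeSpectrum R :=
  ⟨crucialIdeal A B, crucialIdeal_isPrime h⟩

lemma le_saturation_primeCompl_iff (h : A ⋖ B) (Q : PrimeSpectrum R) :
    B ≤ saturation Q.asIdeal.primeCompl A ↔ ¬ crucialPrime h ≤ Q := by
  rw [← PrimeSpectrum.asIdeal_le_asIdeal, SetLike.not_le_iff_exists]
  constructor
  · intro hB
    obtain ⟨b, hb, hbA⟩ := SetLike.exists_of_lt h.lt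
    obtain ⟨r, hr, hrb⟩ := mem_saturation.1 (hB hb)
    exact ⟨r, mem_crucialIdeal_of_pow_smul_mem h hb hbA (n := 1) (by simpa using hrb), hr⟩
  · rintro ⟨r, hr, hrQ⟩
    exact (mem_crucialIdeal_iff_le_saturation.1 hr).trans
      (saturation_mono_left (Submonoid.powers_le.2 hrQ))

lemma saturation_covBy_saturation [WellFoundedLT (Subalgebra R S)] (h : A ⋖ B)
    (hB : ¬ B ≤ saturation W A) : saturation W A ⋖ saturation W B := by
  refine ⟨((saturation W).monotone h.le).lt_of_not_ge
    fun hle => hB (((saturation W).le_closure B).trans hle), fun C hAC hCB => ?_⟩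
  have hC : saturation W C = C := (isClosed_saturation_of_saturation_bot_le
    (((saturation W).monotone bot_le).trans hAC.le)).closure_eq
  have hACB : A ≤ C ⊓ B := le_inf (((saturation W).le_closure A).trans hAC.le) h.le
  rcases h.eq_or_eq hACB inf_le_right with hinf | hinf
  · refine hAC.ne ?_
    rw [← hinf, saturation_inf, hC, inf_eq_left.2 hCB.le]
  · refine hCB.not_ge ?_
    rw [← hC]
    exact (saturation W).monotone (inf_eq_right.1 hinf)

open scoped Classical in
lemma IsRankOn.apply_saturation_eq_add [WellFoundedLT (Subalgebra R S)] {Q : PrimeSpectrum R}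
    {ρ : Subalgebra R S → ℕ} (hρ : IsRankOn (saturation Q.asIdeal.primeCompl ⊥) ⊤ ρ) (h : A ⋖ B) :
    ρ (saturation Q.asIdeal.primeCompl B) =
      ρ (saturation Q.asIdeal.primeCompl A) + if crucialPrime h ≤ Q then 1 else 0 := by
  split_ifs with hQ
  · exact hρ ((saturation _).monotone bot_le)
      (saturation_covBy_saturation h ((le_saturation_primeCompl_iff h Q).not_left.2 hQ)) le_top
  · rw [add_zero]
    exact congrArg ρ (((saturation _).le_closure_iff.1
      ((le_saturation_primeCompl_iff h Q).2 hQ)).antisymm ((saturation _).monotone h.le))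

namespace IsMaxChainFromTo

variable {n : ℕ} {c : Fin (n + 1) → Subalgebra R S}

/-- The crucial primes of the steps of a maximal chain, with multiplicity. -/
def crucialPrimes (hc : IsMaxChainFromTo A B n c) : Multiset (PrimeSpectrum R) :=
  Finset.univ.val.map fun i => crucialPrime (hc.2.2 i)

lemma card_crucialPrimes (hc : IsMaxChainFromTo A B n c) : hc.crucialPrimes.card = n := by
  simp [crucialPrimes]

open scoped Classical in
lemma apply_saturation_eq_add_countP [WellFoundedLT (Subalgebra R S)] {Q : PrimeSpectrum R}
    {ρ : Subalgebra R S → ℕ} (hc : IsMaxChainFromTo A B n c)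
    (hρ : IsRankOn (saturation Q.asIdeal.primeCompl ⊥) ⊤ ρ) :
    ρ (saturation Q.asIdeal.primeCompl B) =
      ρ (saturation Q.asIdeal.primeCompl A) + hc.crucialPrimes.countP (· ≤ Q) := by
  have countP_eq_sum : hc.crucialPrimes.countP (· ≤ Q) =
      ∑ i, if crucialPrime (hc.2.2 i) ≤ Q then 1 else 0 := by
    rw [crucialPrimes, Multiset.countP_map, ← Finset.card_filter]
    rfl
  have telescope := apply_last_eq_apply_zero_add_sum
    (f := fun i => ρ (saturation Q.asIdeal.primeCompl (c i)))
    fun i => hρ.apply_saturation_eq_add (hc.2.2 i)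
  rwa [← countP_eq_sum, hc.1, hc.2.1] at telescope

end IsMaxChainFromTo

theorem isCatenarianExt_of_saturation [WellFoundedLT (Subalgebra R S)]
    [WellFoundedGT (Subalgebra R S)]
    (h : ∀ Q : PrimeSpectrum R, IsCatenarianFromTo (saturation Q.asIdeal.primeCompl ⊥)
      (⊤ : Subalgebra R S)) :
    IsCatenarianExt R S := by
  classical
  intro m n c d hc hd
  rw [← hc.card_crucialPrimes, ← hd.card_crucialPrimes]
  refine congrArg Multiset.card (multiset_eq_of_countP_le_eq fun Q => ?_)
  obtain ⟨ρ, hρ⟩ := isCatenarianFromTo_iff_exists_isRankOn.1 (h Q)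
  exact Nat.add_left_cancel ((hc.apply_saturation_eq_add_countP hρ).symm.trans
    (hd.apply_saturation_eq_add_countP hρ))

end CrucialIdeal

section Localization

open IsScalarTower (toAlgHom)

variable {R S : Type*} (RW SW : Type*) [CommRing R] [CommRing S] [Algebra R S] [CommRing RW]
  [CommRing SW] [Algebra S SW] [Algebra R SW] [Algebra RW SW] [IsScalarTower R S SW]

/-- The localization `A_W` of a subalgebra `A` of `S`, as a subalgebra of the localization `S_W`
over `R_W`. -/
def localize (A : Subalgebra R S) : Subalgebra RW SW :=
  Algebra.adjoin RW (A.map (toAlgHom R S SW))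

lemma localize_mono : Monotone (localize RW SW : Subalgebra R S → Subalgebra RW SW) :=
  fun _ _ h => Algebra.adjoin_mono (Set.image_mono h)

variable [Algebra R RW] [IsScalarTower R RW SW]

variable {RW SW} in
/-- The inverse image in `S` of a subalgebra of a localization of `S`. -/
def contract (C : Subalgebra RW SW) : Subalgebra R S :=
  (C.restrictScalars R).comap (toAlgHom R S SW)

variable (W : Submonoid R) [IsLocalization W RW]
  [IsLocalization (Algebra.algebraMapSubmonoid S W) SW]

lemma toSubmodule_localize (A : Subalgebra R S) :
    Subalgebra.toSubmodule (localize RW SW A) =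
      (Subalgebra.toSubmodule A).localized' RW W (toAlgHom R S SW).toLinearMap := by
  rw [localize, Algebra.adjoin_eq_span, Submodule.localized'_eq_span]
  exact congrArg (Submodule.span RW) (congrArg SetLike.coe
    (Submonoid.closure_eq (A.map (toAlgHom R S SW)).toSubmonoid))

lemma contract_localize (A : Subalgebra R S) : contract (localize RW SW A) = saturation W A := by
  ext x
  let f := (toAlgHom R S SW).toLinearMap
  calc f x ∈ Subalgebra.toSubmodule (localize RW SW A)
    _ ↔ ∃ a ∈ A, ∃ w : W, IsLocalizedModule.mk' f a w = f x := by
      rw [toSubmodule_localize RW SW W, Submodule.mem_localized']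
      rfl
    _ ↔ ∃ a ∈ A, ∃ w v : W, v • a = v • w • x := by
      simp only [IsLocalizedModule.mk'_eq_iff, ← f.map_smul_of_tower,
        IsLocalizedModule.eq_iff_exists W f]
    _ ↔ x ∈ saturation W A := by
      rw [mem_saturation]
      constructor
      · rintro ⟨a, ha, w, v, h⟩
        refine ⟨v * w, (v * w).2, ?_⟩
        rw [mul_smul]
        exact h ▸ A.smul_mem ha (v : R)
      · rintro ⟨w, hw, hwx⟩
        exact ⟨w • x, hwx, ⟨w, hw⟩, 1, rfl⟩

variable {RW SW}

include W

lemma localize_contract (C : Subalgebra RW SW) :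
    localize RW SW (contract (R := R) (S := S) C) = C :=
  Subalgebra.toSubmodule_injective <| (toSubmodule_localize RW SW W _).trans <|
    (Submodule.localized'gi RW W (toAlgHom R S SW).toLinearMap).l_u_eq (Subalgebra.toSubmodule C)

lemma contract_le_contract_iff {C D : Subalgebra RW SW} :
    contract (R := R) (S := S) C ≤ contract D ↔ C ≤ D := by
  refine ⟨fun h => ?_, fun h x hx => h hx⟩
  simpa only [localize_contract W] using localize_mono RW SW h

lemma contract_bot : contract (⊥ : Subalgebra RW SW) = saturation W (⊥ : Subalgebra R S) := by
  have localize_bot : localize RW SW (⊥ : Subalgebra R S) = ⊥ :=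
    bot_unique ((localize_mono RW SW bot_le).trans_eq (localize_contract W ⊥))
  rw [← localize_bot, contract_localize RW SW W]

variable (RW SW)

theorem isCatenarianExt_localization_iff [WellFoundedLT (Subalgebra R S)] :
    IsCatenarianExt RW SW ↔ IsCatenarianFromTo (saturation W ⊥) (⊤ : Subalgebra R S) := by
  let f : Subalgebra RW SW ↪o Subalgebra R S :=
    .ofMapLEIff contract fun _ _ => contract_le_contract_iff W
  have hbot : f ⊥ = saturation W ⊥ := contract_bot W
  have range_f : Set.range f = Set.Ici (f ⊥) := by
    refine Set.Subset.antisymm (Set.range_subset_iff.2 fun C => f.monotone bot_le) fun A hA => ?_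
    have hA : (saturation W).IsClosed A :=
      isClosed_saturation_of_saturation_bot_le (hbot.symm.trans_le hA)
    exact ⟨localize RW SW A, (contract_localize RW SW W A).trans hA.closure_eq⟩
  rw [← hbot, show (⊤ : Subalgebra R S) = f ⊤ from rfl,
    isCatenarianFromTo_map_iff f (range_f ▸ Set.ordConnected_Ici)]
  rfl

end Localization

section FCP

variable {R S : Type*} [CommRing R] [CommRing S] [Algebra R S]

namespace IsFCPExt

lemma wellFoundedLT (h : IsFCPExt R S) : WellFoundedLT (Subalgebra R S) := by
  refine ⟨RelEmbedding.wellFounded_iff_isEmpty.2 ⟨fun f => ?_⟩⟩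
  have antitone : Antitone f := StrictAnti.antitone fun _ _ hab => f.map_rel_iff.2 hab
  exact Set.infinite_range_of_injective f.injective (h _ antitone.isChain_range)

lemma wellFoundedGT (h : IsFCPExt R S) : WellFoundedGT (Subalgebra R S) := by
  refine ⟨RelEmbedding.wellFounded_iff_isEmpty.2 ⟨fun f => ?_⟩⟩
  have monotone : Monotone f := StrictMono.monotone fun _ _ hab => f.map_rel_iff.2 hab
  exact Set.infinite_range_of_injective f.injective (h _ monotone.isChain_range)

end IsFCPExt

lemma saturation_bot_eq_top_of_subsingleton (W : Submonoid R)
    [h : Subsingleton (LocalizedModule W (extQuot R S))] :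
    saturation W (⊥ : Subalgebra R S) = ⊤ := by
  refine top_unique fun x _ => ?_
  obtain ⟨w, hw, hx⟩ := LocalizedModule.subsingleton_iff.1 h (Submodule.Quotient.mk x)
  rw [← Submodule.Quotient.mk_smul, Submodule.Quotient.mk_eq_zero] at hx
  exact mem_saturation.2 ⟨w, hw, Algebra.mem_bot.2 hx⟩

lemma isCatenarianExt_atPrime_iff [WellFoundedLT (Subalgebra R S)] (P : Ideal R) [P.IsPrime] :
    letI := localizationAlgebra P.primeCompl S
      (Rₘ := Localization.AtPrime P)
      (Sₘ := Localization (Algebra.algebraMapSubmonoid S P.primeCompl))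
    IsCatenarianExt (Localization.AtPrime P)
        (Localization (Algebra.algebraMapSubmonoid S P.primeCompl)) ↔
      IsCatenarianFromTo (saturation P.primeCompl ⊥) (⊤ : Subalgebra R S) := by
  let := localizationAlgebra P.primeCompl S
    (Rₘ := Localization.AtPrime P)
    (Sₘ := Localization (Algebra.algebraMapSubmonoid S P.primeCompl))
  have : IsScalarTower R (Localization.AtPrime P)
      (Localization (Algebra.algebraMapSubmonoid S P.primeCompl)) :=
    isScalarTower_localizationAlgebra P.primeCompl S
  exact isCatenarianExt_localization_iff _ _ P.primeCompl

end FCP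

theorem stmt_7_general {R S : Type*} [CommRing R] [CommRing S] [Algebra R S]
    (hFCP : IsFCPExt R S) :
    List.TFAE
      [ IsCatenarianExt R S,
        ∀ (M : Ideal R) (hM : M.IsMaximal),
          letI := hM.isPrime
          Nontrivial (LocalizedModule M.primeCompl (extQuot R S)) →
            letI := localizationAlgebra M.primeCompl S
              (Rₘ := Localization.AtPrime M)
              (Sₘ := Localization (Algebra.algebraMapSubmonoid S M.primeCompl))
            IsCatenarianExt (Localization.AtPrime M)
              (Localization (Algebra.algebraMapSubmonoid S M.primeCompl)),
        ∀ (P : Ideal R) (hP : P.IsPrime),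
          Nontrivial (LocalizedModule P.primeCompl (extQuot R S)) →
            letI := localizationAlgebra P.primeCompl S
              (Rₘ := Localization.AtPrime P)
              (Sₘ := Localization (Algebra.algebraMapSubmonoid S P.primeCompl))
            IsCatenarianExt (Localization.AtPrime P)
              (Localization (Algebra.algebraMapSubmonoid S P.primeCompl)) ] := by
  have := hFCP.wellFoundedLT
  have := hFCP.wellFoundedGT
  tfae_have 1 → 3 := fun h P _ _ => (isCatenarianExt_atPrime_iff P).2 (h.of_le bot_le)
  tfae_have 3 → 2 := fun h M hM => h M hM.isPrime
  tfae_have 2 → 1 := by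
    refine fun h => isCatenarianExt_of_saturation fun Q => ?_
    obtain ⟨M, hM, hQM⟩ := Q.asIdeal.exists_le_maximal Q.isPrime.ne_top
    have := hM.isPrime
    suffices IsCatenarianFromTo (saturation M.primeCompl ⊥) (⊤ : Subalgebra R S) from
      this.of_le (saturation_mono_left fun r hrM hrQ => hrM (hQM hrQ))
    rcases subsingleton_or_nontrivial (LocalizedModule M.primeCompl (extQuot R S)) with _ | hM'
    · rw [saturation_bot_eq_top_of_subsingleton]
      exact isCatenarianFromTo_self ⊤
    · exact (isCatenarianExt_atPrime_iff M).1 (h M hM hM')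
  tfae_finish

/-- For an FCP extension `R ⊆ S` the following are equivalent:
(1) `R ⊆ S` is catenarian; (2) `R_M ⊆ S_M` is catenarian for each maximal ideal
`M ∈ MSupp(S/R)`; (3) `R_P ⊆ S_P` is catenarian for each prime `P ∈ Supp(S/R)`. -/
theorem stmt_7 {R S : Type*} [CommRing R] [CommRing S] [Algebra R S]
    (hinj : Function.Injective (algebraMap R S)) (hFCP : IsFCPExt R S) :
    List.TFAE
      [ IsCatenarianExt R S,
        ∀ (M : Ideal R) (hM : M.IsMaximal),
          letI := hM.isPrime
          Nontrivial (LocalizedModule M.primeCompl (extQuot R S)) →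
            letI := localizationAlgebra M.primeCompl S
              (Rₘ := Localization.AtPrime M)
              (Sₘ := Localization (Algebra.algebraMapSubmonoid S M.primeCompl))
            IsCatenarianExt (Localization.AtPrime M)
              (Localization (Algebra.algebraMapSubmonoid S M.primeCompl)),
        ∀ (P : Ideal R) (hP : P.IsPrime),
          Nontrivial (LocalizedModule P.primeCompl (extQuot R S)) →
            letI := localizationAlgebra P.primeCompl S
              (Rₘ := Localization.AtPrime P)
              (Sₘ := Localization (Algebra.algebraMapSubmonoid S P.primeCompl))
            IsCatenarianExt (Localization.AtPrime P)
              (Localization (Algebra.algebraMapSubmonoid S P.primeCompl)) ] :=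
  stmt_7_general hFCP
end

section
/- Let R be a commutative ring and n ≥ 2 a positive integer such that the diagonal extension R ⊆ Rⁿ (r ↦ (r,…,r)) has FCP. Then R ⊆ Rⁿ is catenarian. -/
/-!
Every covering `T ⋖ A` of subalgebras is a covering of `R`-modules, provided that `A` is integral
over `R` and has no residue field larger than a quotient of `R`. Maximal chains of subalgebras are
then composition series of `R`-modules, and Jordan–Hölder gives them equal lengths. The tuple
`x ∈ Rⁿ` is a root of `∏ i, (X - xᵢ)`, so every residue field of `Rⁿ` is a quotient of `R`, and this
property descends to subalgebras by lying over.

For a covering `T ⋖ A`, an ideal `I` of `A` satisfies `I ⊆ T` or `T + I = A`, since `T + I` is a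
subalgebra. As `A` is a finite `T`-module, `A / T` has a simple quotient, with annihilator a maximal
ideal `M` of `T`; then `T + M A ≠ A`, hence `M A ⊆ T`. So the conductor `C` of `T` in `A` contains
`M A`, and `A / C` is Artinian, being finite over the field `T / M`. Its socle provides `x ∉ T` and
a maximal ideal `Q` of `A` with `Q x ⊆ T`. Since `T + A x = A`, multiplication by `x` induces an
isomorphism `A / Q ≃ A / T` of `R`-modules, and `A / Q` is simple over `R`.
-/

section ResiduallyTrivial

variable {R A B : Type*} [CommRing R] [CommRing A] [CommRing B]
  [Algebra R A] [Algebra A B] [Algebra R B]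

variable (R A) in
/-- The residue fields of `A` at its maximal ideals do not grow over `R`: each of them is a
quotient of `R`. An integral extension with this property at all primes is called
infra-integral. -/
def IsResiduallyTrivial : Prop :=
  ∀ Q : Ideal A, Q.IsMaximal → Function.Surjective (algebraMap R (A ⧸ Q))

lemma isResiduallyTrivial_iff_exists_sub_mem :
    IsResiduallyTrivial R A ↔
      ∀ Q : Ideal A, Q.IsMaximal → ∀ x : A, ∃ r : R, algebraMap R A r - x ∈ Q := by
  simp only [IsResiduallyTrivial, Function.Surjective, Ideal.Quotient.mk_surjective.forall,
    Ideal.Quotient.algebraMap_eq, IsScalarTower.algebraMap_apply R A (A ⧸ _), Ideal.Quotient.eq]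

lemma isResiduallyTrivial_pi (R ι : Type*) [CommRing R] [Finite ι] :
    IsResiduallyTrivial R (ι → R) := by
  have := Fintype.ofFinite ι
  refine isResiduallyTrivial_iff_exists_sub_mem.2 fun Q hQ x => ?_
  have hprod : ∏ i, (algebraMap R (ι → R) (x i) - x) = 0 := by
    ext j
    rw [Finset.prod_apply]
    exact Finset.prod_eq_zero (Finset.mem_univ j) (sub_self _)
  obtain ⟨i, -, hi⟩ := hQ.isPrime.prod_mem_iff.1 (hprod ▸ Q.zero_mem)
  exact ⟨x i, hi⟩

lemma IsResiduallyTrivial.of_isIntegral [IsScalarTower R A B] [FaithfulSMul A B]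
    [Algebra.IsIntegral A B] (h : IsResiduallyTrivial R B) : IsResiduallyTrivial R A := by
  refine isResiduallyTrivial_iff_exists_sub_mem.2 fun P hP x => ?_
  obtain ⟨Q, hQ, ⟨rfl⟩⟩ := Ideal.exists_maximal_ideal_liesOver_of_isIntegral (S := B) P
  obtain ⟨r, hr⟩ := isResiduallyTrivial_iff_exists_sub_mem.1 h Q hQ (algebraMap A B x)
  refine ⟨r, ?_⟩
  rwa [Ideal.under_def, Ideal.mem_comap, map_sub, ← IsScalarTower.algebraMap_apply]

lemma IsResiduallyTrivial.isCoatom_restrictScalars (h : IsResiduallyTrivial R A) {Q : Ideal A}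
    (hQ : Q.IsMaximal) : IsCoatom (Submodule.restrictScalars R Q) := by
  let _ := Ideal.Quotient.field Q
  have : IsSimpleModule R (A ⧸ Q) :=
    (isSimpleModule_iff_isSimpleModule_of_algebraMap_surjective (h Q hQ)).2 inferInstance
  exact isSimpleModule_iff_isCoatom.1 (.congr (Submodule.Quotient.restrictScalarsEquiv R Q))

end ResiduallyTrivial

lemma exists_isMaximal_notMem_forall_mul_mem_of_isArtinianRing_quotient {A : Type*} [CommRing A]
    {I : Ideal A} [IsArtinianRing (A ⧸ I)] (hI : I ≠ ⊤) :
    ∃ Q : Ideal A, Q.IsMaximal ∧ ∃ x ∉ I, ∀ q ∈ Q, q * x ∈ I := by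
  have := Ideal.Quotient.nontrivial_iff.2 hI
  obtain ⟨P, hP⟩ := associatedPrimes.nonempty (A ⧸ I) (A ⧸ I)
  obtain ⟨hprime, y, hPy⟩ := isAssociatedPrime_iff.1 hP
  have hmax : P.IsMaximal := IsArtinianRing.isMaximal_of_isPrime P
  obtain ⟨x, rfl⟩ := Ideal.Quotient.mk_surjective y
  refine ⟨P.comap (Ideal.Quotient.mk I),
    Ideal.comap_isMaximal_of_surjective _ Ideal.Quotient.mk_surjective, x, fun hx => ?_,
    fun q hq => ?_⟩
  · refine hmax.ne_top ((Ideal.eq_top_iff_one P).2 ?_)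
    simp [hPy, Submodule.mem_colon_singleton, Ideal.Quotient.eq_zero_iff_mem.2 hx]
  · rw [Ideal.mem_comap, hPy, Submodule.mem_colon_singleton, Submodule.mem_bot, smul_eq_mul,
      ← map_mul] at hq
    exact Ideal.Quotient.eq_zero_iff_mem.1 hq

section Conductor

variable {R A : Type*} [CommRing R] [CommRing A] [Algebra R A] {T : Subalgebra R A}

/-- The conductor `(T : A)` of a subalgebra `T` of `A`: the largest ideal of `A` contained in
`T`. -/
def subalgebraConductor (T : Subalgebra R A) : Ideal A where
  carrier := {a | ∀ b, a * b ∈ T}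
  add_mem' ha hb c := by rw [add_mul]; exact T.add_mem (ha c) (hb c)
  zero_mem' c := by rw [zero_mul]; exact T.zero_mem
  smul_mem' c a ha b := by rw [smul_eq_mul, mul_comm c, mul_assoc]; exact ha (c * b)

lemma le_subalgebraConductor_iff {I : Ideal A} :
    I ≤ subalgebraConductor T ↔ ∀ a ∈ I, a ∈ T :=
  ⟨fun h a ha => mul_one a ▸ h ha 1, fun h _ ha b => h _ (I.mul_mem_right b ha)⟩

lemma subalgebraConductor_ne_top (hT : T ≠ ⊤) : subalgebraConductor T ≠ ⊤ := fun h =>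
  hT (Algebra.eq_top_iff.2 fun a => le_subalgebraConductor_iff.1 h.ge a Submodule.mem_top)

lemma le_subalgebraConductor_or_sup_eq_top (hT : IsCoatom T) (I : Ideal A) :
    I ≤ subalgebraConductor T ∨ Subalgebra.toSubmodule T ⊔ I.restrictScalars R = ⊤ := by
  let W : Subalgebra R A := (T.map (Ideal.Quotient.mkₐ R I)).comap (Ideal.Quotient.mkₐ R I)
  rcases hT.le_iff.1 ((Subalgebra.gc_map_comap _).le_u_l T : T ≤ W) with hW | hW
  · right
    refine eq_top_iff.2 fun a _ => ?_
    obtain ⟨t, ht, hta⟩ : a ∈ W := hW.ge Algebra.mem_top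
    exact Submodule.mem_sup.2 ⟨t, ht, a - t, Ideal.Quotient.eq.1 hta.symm, add_sub_cancel t a⟩
  · left
    refine le_subalgebraConductor_iff.2 fun a ha => hW.le ⟨0, T.zero_mem, ?_⟩
    exact (map_zero _).trans (Ideal.Quotient.eq_zero_iff_mem.2 ha).symm

lemma module_finite_of_isCoatom [Algebra.IsIntegral T A] (hT : IsCoatom T) :
    Module.Finite T A := by
  obtain ⟨u, -, hu⟩ := SetLike.exists_of_lt hT.lt_top
  let V : Subalgebra T A := Algebra.adjoin T {u}
  have hTV : T < V.restrictScalars R := SetLike.lt_iff_le_and_exists.2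
    ⟨fun t ht => V.algebraMap_mem ⟨t, ht⟩, u, Algebra.self_mem_adjoin_singleton T u, hu⟩
  have hV : V = ⊤ := Algebra.eq_top_iff.2 fun a => (hT.2 _ hTV).ge (Algebra.mem_top (x := a))
  have hfg : (Subalgebra.toSubmodule V).FG :=
    (Algebra.IsIntegral.isIntegral (R := T) u).fg_adjoin_singleton
  exact ⟨by rwa [hV, Algebra.top_toSubmodule] at hfg⟩

lemma exists_isMaximal_map_le_subalgebraConductor [Module.Finite T A] (hT : IsCoatom T) :
    ∃ M : Ideal T, M.IsMaximal ∧ M.map (algebraMap T A) ≤ subalgebraConductor T := by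
  have hmem_one : ∀ a, a ∈ (1 : Submodule T A) ↔ a ∈ T := fun a => by
    rw [Submodule.mem_one]
    exact ⟨by rintro ⟨t, rfl⟩; exact t.2, fun ha => ⟨⟨a, ha⟩, rfl⟩⟩
  have hone : (1 : Submodule T A) ≠ ⊤ := fun h =>
    hT.1 (Algebra.eq_top_iff.2 fun a => (hmem_one a).1 (h ▸ Submodule.mem_top))
  obtain ⟨N, hN, h1N⟩ := (eq_top_or_exists_le_coatom (1 : Submodule T A)).resolve_left hone
  have : IsSimpleModule T (A ⧸ N) := isSimpleModule_iff_isCoatom.2 hN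
  let M := Module.annihilator T (A ⧸ N)
  have hMN : (M.map (algebraMap T A)).restrictScalars T ≤ N := by
    rw [← Ideal.smul_top_eq_map]
    refine Submodule.smul_le.2 fun m hm a _ => ?_
    exact (Submodule.Quotient.mk_eq_zero N).1 (Module.mem_annihilator.1 hm (N.mkQ a))
  refine ⟨M, IsSimpleModule.annihilator_isMaximal, ?_⟩
  refine (le_subalgebraConductor_or_sup_eq_top hT _).resolve_right fun hsup => hN.1 ?_
  refine eq_top_iff.2 fun a _ => ?_
  obtain ⟨t, ht, i, hi, rfl⟩ := Submodule.mem_sup.1 (hsup ▸ Submodule.mem_top (x := a))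
  exact N.add_mem (h1N ((hmem_one t).2 ht)) (hMN hi)

lemma isArtinianRing_quotient_subalgebraConductor [Module.Finite T A] (hT : IsCoatom T) :
    IsArtinianRing (A ⧸ subalgebraConductor T) := by
  obtain ⟨M, hM, hMC⟩ := exists_isMaximal_map_le_subalgebraConductor hT
  let _ := Ideal.Quotient.field M
  let _ : Algebra (T ⧸ M) (A ⧸ subalgebraConductor T) :=
    Ideal.Quotient.algebraQuotientOfLEComap (Ideal.map_le_iff_le_comap.1 hMC)
  have : IsScalarTower T (T ⧸ M) (A ⧸ subalgebraConductor T) := .of_algebraMap_eq fun _ => rfl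
  have := Module.Finite.of_restrictScalars_finite T (T ⧸ M) (A ⧸ subalgebraConductor T)
  exact .of_finite (T ⧸ M) _

lemma exists_isMaximal_notMem_forall_mul_mem_of_isCoatom [Module.Finite T A] (hT : IsCoatom T) :
    ∃ Q : Ideal A, Q.IsMaximal ∧ ∃ x ∉ T, ∀ q ∈ Q, q * x ∈ T := by
  have := isArtinianRing_quotient_subalgebraConductor hT
  obtain ⟨Q, hQ, y, hy, hQy⟩ :=
    exists_isMaximal_notMem_forall_mul_mem_of_isArtinianRing_quotient
      (subalgebraConductor_ne_top hT.1)
  obtain ⟨b, hb⟩ : ∃ b, y * b ∉ T := not_forall.1 hy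
  exact ⟨Q, hQ, y * b, hb, fun q hq => mul_assoc q y b ▸ hQy q hq b⟩

lemma mkQ_comp_mulRight_surjective (hT : IsCoatom T) {x : A} (hx : x ∉ T) :
    Function.Surjective ((Subalgebra.toSubmodule T).mkQ ∘ₗ LinearMap.mulRight R x) := by
  have hsup := (le_subalgebraConductor_or_sup_eq_top hT (Ideal.span {x})).resolve_left
    fun h => hx (le_subalgebraConductor_iff.1 h _ (Ideal.mem_span_singleton_self x))
  rw [← LinearMap.range_eq_top, LinearMap.range_comp, Submodule.map_mkQ_eq_top, ← hsup]
  congr 1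
  ext a
  simp [Ideal.mem_span_singleton']

lemma IsResiduallyTrivial.isCoatom_toSubmodule [Algebra.IsIntegral R A]
    (hA : IsResiduallyTrivial R A) (hT : IsCoatom T) : IsCoatom (Subalgebra.toSubmodule T) := by
  have : Algebra.IsIntegral T A := .tower_top R
  have := module_finite_of_isCoatom hT
  obtain ⟨Q, hQ, x, hx, hQx⟩ := exists_isMaximal_notMem_forall_mul_mem_of_isCoatom hT
  let f : A →ₗ[R] A ⧸ Subalgebra.toSubmodule T :=
    (Subalgebra.toSubmodule T).mkQ ∘ₗ LinearMap.mulRight R x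
  have mem_ker (a : A) : a ∈ LinearMap.ker f ↔ a * x ∈ T := by simp [f]
  have hker : LinearMap.ker f ≠ ⊤ := fun h =>
    hx (one_mul x ▸ (mem_ker 1).1 (h ▸ Submodule.mem_top))
  have hQ' := hA.isCoatom_restrictScalars hQ
  have hkerQ : LinearMap.ker f = Q.restrictScalars R :=
    (hQ'.le_iff.1 fun q hq => (mem_ker q).2 (hQx q hq)).resolve_left hker
  have := isSimpleModule_iff_isCoatom.2 (hkerQ ▸ hQ')
  exact isSimpleModule_iff_isCoatom.1
    (.congr (f.quotKerEquivOfSurjective (mkQ_comp_mulRight_surjective hT hx)).symm)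

end Conductor

section CovBy

variable {R S : Type*} [CommRing R] [CommRing S] [Algebra R S] {T U : Subalgebra R S}

lemma isCoatom_comap_val_of_covBy (h : T ⋖ U) : IsCoatom (T.comap U.val) := by
  let f : Subalgebra R U ↪o Subalgebra R S :=
    .ofMapLEIff (Subalgebra.map U.val) fun V W => by
      refine ⟨fun hle v hv => ?_, fun hle => Subalgebra.map_mono hle⟩
      obtain ⟨w, hw, hwv⟩ := hle ⟨v, hv, rfl⟩
      rwa [← Subtype.val_injective hwv]
  have hT : f (T.comap U.val) = T :=
    Subalgebra.map_comap_eq_self (h.le.trans U.range_val.ge)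
  have hU : f ⊤ = U := (Algebra.map_top _).trans U.range_val
  refine covBy_top_iff.1 (CovBy.of_image f ?_)
  rwa [hT, hU]

lemma IsResiduallyTrivial.toSubmodule_covBy [Algebra.IsIntegral R S]
    (hS : IsResiduallyTrivial R S) (h : T ⋖ U) :
    Subalgebra.toSubmodule T ⋖ Subalgebra.toSubmodule U := by
  have : Algebra.IsIntegral U S := .tower_top R
  have : Algebra.IsIntegral R U := .of_injective U.val Subtype.val_injective
  have hU : IsResiduallyTrivial R U := hS.of_isIntegral
  have hcoatom := hU.isCoatom_toSubmodule (isCoatom_comap_val_of_covBy h)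
  exact (covBy_iff_quot_is_simple (Subalgebra.toSubmodule.monotone h.le)).2
    (isSimpleModule_iff_isCoatom.2 hcoatom)

end CovBy

lemma isCatenarianFromTo_of_map_isMaximal {α L : Type*} [PartialOrder α] [Lattice L]
    [JordanHolderLattice L] (f : α → L)
    (hf : ∀ a b, a ⋖ b → JordanHolderLattice.IsMaximal (f a) (f b)) (T U : α) :
    IsCatenarianFromTo T U := by
  rintro p q c d ⟨hc0, hcp, hc⟩ ⟨hd0, hdq, hd⟩
  let s : CompositionSeries L := ⟨p, f ∘ c, fun i => hf _ _ (hc i)⟩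
  let t : CompositionSeries L := ⟨q, f ∘ d, fun i => hf _ _ (hd i)⟩
  have hhead : s.head = t.head := congrArg f (hc0.trans hd0.symm)
  have hlast : s.last = t.last := congrArg f (hcp.trans hdq.symm)
  exact (CompositionSeries.jordan_holder s t hhead hlast).length_eq

theorem stmt_11_general {R S : Type*} [CommRing R] [CommRing S] [Algebra R S]
    [Algebra.IsIntegral R S] (hS : IsResiduallyTrivial R S) (T U : Subalgebra R S) :
    IsCatenarianFromTo T U :=
  isCatenarianFromTo_of_map_isMaximal Subalgebra.toSubmodule
    (fun _ _ => hS.toSubmodule_covBy) T U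

/-- If `n ≥ 2` and the diagonal extension `R ⊆ Rⁿ` has FCP,
then it is catenarian. -/
theorem stmt_11 (R : Type*) [CommRing R] (n : ℕ) (hn : 2 ≤ n)
    (hFCP : IsFCPExt R (Fin n → R)) :
    IsCatenarianExt R (Fin n → R) :=
  stmt_11_general (isResiduallyTrivial_pi R (Fin n)) ⊥ ⊤
end
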